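/- Let ι be the identity permutation of [n] and let π = π_1 … π_n be a permutation of [n] that is not two-separated from ι. Then every run of big jumps of π that contains neither the value n nor the value n−1 is a suffix of π, i.e., its last position is position n. -/

import Mathlib

/-- Two permutations `π'` and `π''` of `Fin n` (viewed as linear orders: `π i` is the
element in position `i`) are two-separated if some element `a` is followed immediately
by `x` then `y` in `π'` and immediately by `v` then `w` in `π''`, where `x, y, v, w`
are four pairwise distinct elements. -/
def TwoSeparated (n : ℕ) (π' π'' : Equiv.Perm (Fin n)) : Prop :=
  ∃ i j : ℕ, ∃ hi : i + 2 < n, ∃ hj : j + 2 < n,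
    π' ⟨i, by omega⟩ = π'' ⟨j, by omega⟩ ∧
    ({π' ⟨i + 1, by omega⟩, π' ⟨i + 2, hi⟩,
      π'' ⟨j + 1, by omega⟩, π'' ⟨j + 2, hj⟩} : Finset (Fin n)).card = 4

/-- The value of the permutation `π` at the (0-indexed) position `k`, as an integer;
positions `≥ n` are sent to `0`. -/
def pval (n : ℕ) (π : Equiv.Perm (Fin n)) (k : ℕ) : ℤ :=
  if h : k < n then ((π ⟨k, h⟩ : ℕ) : ℤ) else 0

/-- The defining conditions of a run of big jumps `π_j, π_(j+1), …, π_(j+t)`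
(positions 0-indexed): `t ≥ 1`, the run fits inside the permutation, the first jump
is not in `{−2, −1, 1, 2, 3}` and the later jumps are not in `{−1, 1, 2}`. -/
def RunCore (n : ℕ) (π : Equiv.Perm (Fin n)) (j t : ℕ) : Prop :=
  1 ≤ t ∧ j + t < n ∧
  pval n π (j + 1) - pval n π j ∉ ({-2, -1, 1, 2, 3} : Set ℤ) ∧
  ∀ k : ℕ, j < k → k < j + t → pval n π (k + 1) - pval n π k ∉ ({-1, 1, 2} : Set ℤ)

/-- `π_j, …, π_(j+t)` is a run of big jumps of `π`: it satisfies the run conditions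
and is maximal, i.e. it can be extended neither to the left nor to the right. -/
def IsRunOfBigJumps (n : ℕ) (π : Equiv.Perm (Fin n)) (j t : ℕ) : Prop :=
  RunCore n π j t ∧
  ¬ (1 ≤ j ∧ RunCore n π (j - 1) (t + 1)) ∧
  ¬ RunCore n π j (t + 1)

theorem pval_inj_aux (n : ℕ) (π : Equiv.Perm (Fin n)) (a b : ℕ) (ha : a < n) (hb : b < n)
    (hab : pval n π a = pval n π b) : a = b := by
  simp only [pval, ha, hb, dif_pos] at hab
  have h1 : π ⟨a, ha⟩ = π ⟨b, hb⟩ := Fin.ext (by exact_mod_cast hab)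
  simpa using π.injective h1

theorem not_sep_aux (n : ℕ) (π : Equiv.Perm (Fin n))
    (h : ¬ TwoSeparated n π (Equiv.refl (Fin n))) (i : ℕ) (hi : i + 2 < n)
    (h1 : pval n π i ≠ (n : ℤ) - 1) (h2 : pval n π i ≠ (n : ℤ) - 2) :
    pval n π (i + 1) - pval n π i = 1 ∨ pval n π (i + 1) - pval n π i = 2 ∨
    pval n π (i + 2) - pval n π i = 1 ∨ pval n π (i + 2) - pval n π i = 2 := by
  by_contra hc
  have hne : pval n π (i + 1) ≠ pval n π (i + 2) := fun e => by
    have := pval_inj_aux n π _ _ (by omega) hi e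
    omega
  have e0 : i < n := by omega
  have e1 : i + 1 < n := by omega
  simp only [pval, e0, e1, hi, dif_pos] at hc h1 h2 hne
  have hlt := (π ⟨i, e0⟩).isLt
  apply h
  refine ⟨i, (π ⟨i, e0⟩ : ℕ), hi, by omega, by simp, ?_⟩
  rw [Finset.card_insert_of_notMem, Finset.card_insert_of_notMem, Finset.card_insert_of_notMem,
    Finset.card_singleton] <;>
  simp only [Finset.mem_insert, Finset.mem_singleton, Equiv.refl_apply, Fin.ext_iff] <;>
  omega

/-- If `π` is not two-separated from the identity permutation, then every run of big
jumps of `π` containing neither the largest nor the second largest value (the values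
`n` and `n−1` of the paper, i.e. `n−1` and `n−2` in the 0-indexed encoding) is a
suffix of `π`: its last position is the last position of the permutation. -/
theorem stmt15 (n : ℕ) (π : Equiv.Perm (Fin n))
    (h : ¬ TwoSeparated n π (Equiv.refl (Fin n)))
    (j t : ℕ) (hrun : IsRunOfBigJumps n π j t)
    (hval : ∀ k : ℕ, j ≤ k → k ≤ j + t →
      pval n π k ≠ (n : ℤ) - 1 ∧ pval n π k ≠ (n : ℤ) - 2) :
    j + t = n - 1 := by
  obtain ⟨⟨ht, hn, hf, hl⟩, -, hr⟩ := hrun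
  by_contra hne
  have hm : j + t + 1 < n := by omega
  have hlast : pval n π (j + t + 1) - pval n π (j + t) ∈ ({-1, 1, 2} : Set ℤ) := by
    by_contra hnot
    refine hr ⟨by omega, by omega, hf, fun k hk hk' => ?_⟩
    by_cases hkt : k = j + t
    · subst hkt; exact hnot
    · exact hl k hk (by omega)
  have hall : ∀ k, j ≤ k → k < j + t →
      pval n π (k + 1) - pval n π k ∉ ({-1, 1, 2} : Set ℤ) := by
    intro k hk hk'
    by_cases hkj : k = j
    · subst hkj
      simp only [Set.mem_insert_iff, Set.mem_singleton_iff] at hf ⊢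
      omega
    · exact hl k (by omega) hk'
  obtain ⟨s, rfl⟩ : ∃ s, t = s + 1 := ⟨t - 1, by omega⟩
  have A := not_sep_aux n π h (j + s) (by omega)
    (hval _ (by omega) (by omega)).1 (hval _ (by omega) (by omega)).2
  have B := hall (j + s) (by omega) (by omega)
  have D := pval_inj_aux n π (j + s) (j + s + 1) (by omega) (by omega)
  rw [show j + (s + 1) + 1 = j + s + 2 by omega, show j + (s + 1) = j + s + 1 by omega] at hlast
  simp only [Set.mem_insert_iff, Set.mem_singleton_iff] at hf hlast B hall
  rcases Nat.eq_zero_or_pos s with hs | hs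
  · subst hs
    simp only [Nat.add_zero] at *
    omega
  · obtain ⟨r, rfl⟩ : ∃ r, s = r + 1 := ⟨s - 1, by omega⟩
    have A' := not_sep_aux n π h (j + r) (by omega)
      (hval _ (by omega) (by omega)).1 (hval _ (by omega) (by omega)).2
    have B' := hall (j + r) (by omega) (by omega)
    have D' := pval_inj_aux n π (j + r) (j + r + 3) (by omega) (by omega)
    rw [show j + (r + 1) + 2 = j + r + 3 by omega, show j + (r + 1) + 1 = j + r + 2 by omega,
      show j + (r + 1) = j + r + 1 by omega] at *
    omega
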